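/- (Fefferman–Stein vector-valued maximal inequality) Let (f_j)_{j∈ℤ} be a sequence of measurable functions on ℝⁿ, 1 < p < ∞ and 1 < q ≤ ∞. Then ‖ ‖(Mf_j)_j‖_{ℓ^q} ‖_{L^p} ≤ C_n μ(p) μ(q) ‖ ‖(f_j)_j‖_{ℓ^q} ‖_{L^p}, where μ(r) = max{r, (r−1)^{−1}}. -/

import Mathlib

open MeasureTheory

noncomputable section

variable {n : ℕ}

/-- The centered Hardy–Littlewood maximal function. -/
def HLmax (f : EuclideanSpace ℝ (Fin n) → ℂ) (x : EuclideanSpace ℝ (Fin n)) : ENNReal :=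
  ⨆ r : {r : ℝ // 0 < r},
    (volume (Metric.ball (0 : EuclideanSpace ℝ (Fin n)) r))⁻¹ *
      ∫⁻ y in Metric.ball (0 : EuclideanSpace ℝ (Fin n)) (r : ℝ), ‖f (x + y)‖₊

/-- The `ℓ^q` norm (with `q` possibly `∞`) of a `ℤ`-indexed family in `[0,∞]`. -/
def elq (q : ENNReal) (a : ℤ → ENNReal) : ENNReal :=
  if q = ⊤ then ⨆ j, a j else (∑' j, (a j) ^ q.toReal) ^ (1 / q.toReal)

/-!
The engine is the weighted inequality `∫ (Mf)^r w ≤ C ∫ f^r Mw` for `1 < r`, which holds for every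
doubling measure: a Vitali covering of `{Mf > t}` by balls on which `f` has average larger than `t`
gives `t w(Mf > t) ≤ C ∫ f Mw`; truncating `f` at height `t / 2` and integrating against
`t^(r-2) dt` upgrades this weak type bound to the strong one. The vector-valued inequality then
splits into three ranges of exponents.

* If `q = ∞`, then `sup_j Mf_j ≤ M(sup_j f_j)` reduces it to the scalar one.
* If `p ≤ q`, let `G = ‖(f_j)_j‖_{ℓ^q}` and write `f_j = H_j^(p/q) G^(1-p/q)`, so that
  `∑ H_j^p = G^p`. Hölder's inequality on balls gives `Mf_j ≤ (MH_j)^(p/q) (MG)^(1-p/q)`, and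
  Hölder's inequality on the whole space leaves only the scalar inequality in `L^p` for the `H_j`
  and `G`.
* If `q < p`, pair `∑ (Mf_j)^q` with a weight `w` in the dual of `L^(p/q)`; the weighted inequality
  moves the maximal operator from the `f_j` to `w`, where the scalar inequality applies to it.
-/

open Metric Set
open scoped ENNReal NNReal

section Lintegral

variable {α : Type*} [MeasurableSpace α] {μ : Measure α}

lemma lintegral_Ioi_ofReal_rpow_eq_top (s : ℝ) :
    ∫⁻ t in Ioi (0 : ℝ), ENNReal.ofReal (t ^ s) = ∞ := by
  by_contra h
  have h_nonneg : 0 ≤ᵐ[volume.restrict (Ioi 0)] fun t : ℝ => t ^ s :=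
    ae_restrict_of_forall_mem measurableSet_Ioi fun t ht => Real.rpow_nonneg (le_of_lt ht) s
  exact not_integrableOn_Ioi_rpow s
    ⟨by fun_prop, (hasFiniteIntegral_iff_ofReal h_nonneg).2 (lt_top_iff_ne_top.2 h)⟩

lemma lintegral_rpow_eq_lintegral_measure_ofReal_lt_mul {g : α → ℝ≥0∞} (hg : AEMeasurable g μ)
    {s : ℝ} (hs : 0 < s) :
    ∫⁻ x, g x ^ s ∂μ = ENNReal.ofReal s *
      ∫⁻ t in Ioi (0 : ℝ), μ {x | ENNReal.ofReal t < g x} * ENNReal.ofReal (t ^ (s - 1)) := by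
  by_cases h_top : μ {x | g x = ∞} = 0
  · have h_fin : ∀ᵐ x ∂μ, g x ≠ ∞ := measure_eq_zero_iff_ae_notMem.1 h_top
    have h_toReal := lintegral_rpow_eq_lintegral_meas_lt_mul (μ := μ)
      (.of_forall fun x => (g x).toReal_nonneg) hg.ennreal_toReal hs
    convert! h_toReal using 1
    · refine lintegral_congr_ae (h_fin.mono fun x hx => ?_)
      beta_reduce
      rw [ENNReal.toReal_rpow, ENNReal.ofReal_toReal (ENNReal.rpow_ne_top_of_nonneg hs.le hx)]
    · congr 1
      refine setLIntegral_congr_fun measurableSet_Ioi fun t ht => ?_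
      congr 1
      refine measure_congr (h_fin.mono fun x hx => propext ?_)
      exact ENNReal.ofReal_lt_iff_lt_toReal (le_of_lt ht) hx
  · have h_left : ∫⁻ x, g x ^ s ∂μ = ∞ :=
      lintegral_eq_top_of_measure_eq_top_ne_zero (hg.pow_const s)
        (by simpa only [ENNReal.rpow_eq_top_iff_of_pos hs] using h_top)
    have h_right : ∞ ≤ ∫⁻ t in Ioi (0 : ℝ),
        μ {x | ENNReal.ofReal t < g x} * ENNReal.ofReal (t ^ (s - 1)) := calc
      ∞ = μ {x | g x = ∞} * ∫⁻ t in Ioi (0 : ℝ), ENNReal.ofReal (t ^ (s - 1)) := by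
        rw [lintegral_Ioi_ofReal_rpow_eq_top, ENNReal.mul_top h_top]
      _ ≤ _ := by
        rw [← lintegral_const_mul _ (by fun_prop)]
        gcongr with t x
        exact fun hx => hx ▸ ENNReal.ofReal_lt_top
    rw [h_left, top_le_iff.1 h_right, ENNReal.mul_top (by simpa using hs)]

lemma exists_measurable_lt_lintegral_of_lt_lintegral [SigmaFinite μ] {F : α → ℝ≥0∞} {L : ℝ≥0∞}
    (hL : L < ∫⁻ x, F x ∂μ) :
    ∃ g : α → ℝ≥0∞, Measurable g ∧ g ≤ F ∧ ∫⁻ x, g x ∂μ < ∞ ∧ L < ∫⁻ x, g x ∂μ := by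
  simp_rw [lintegral_eq_nnreal, lt_iSup_iff] at hL
  obtain ⟨φ, hφF, hLφ⟩ := hL
  rw [← SimpleFunc.lintegral_eq_lintegral] at hLφ
  obtain ⟨g, hgφ, hg_fin, hLg⟩ := exists_lt_lintegral_simpleFunc_of_lt_lintegral (f := φ) hLφ
  exact ⟨fun x => g x, g.measurable.coe_nnreal_ennreal,
    fun x => (ENNReal.coe_le_coe.2 (hgφ x)).trans (hφF x), hg_fin, hLg⟩

lemma lintegral_rpow_le_of_forall_lintegral_mul_le [SigmaFinite μ] {F : α → ℝ≥0∞} {C : ℝ≥0∞}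
    {s s' : ℝ} (hs : s.HolderConjugate s')
    (hF : ∀ w : α → ℝ≥0∞, Measurable w →
      ∫⁻ x, F x * w x ∂μ ≤ C * (∫⁻ x, w x ^ s' ∂μ) ^ (1 / s')) :
    (∫⁻ x, F x ^ s ∂μ) ^ (1 / s) ≤ C := by
  have hs_pos : 0 < s := hs.pos
  have hs'_pos : 0 < s' := hs.symm.pos
  have h_exp : 1 / s + 1 / s' = 1 := by simpa only [one_div] using hs.inv_add_inv_eq_one
  rw [one_div, ENNReal.rpow_inv_le_iff hs_pos]
  refine le_of_forall_lt fun L hL => ?_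
  obtain ⟨g, hg, hgF, hg_fin, hLg⟩ := exists_measurable_lt_lintegral_of_lt_lintegral hL
  -- Test with `w = g ^ (1 / s')`; the finiteness of `∫ g` allows cancelling `(∫ g) ^ (1 / s')`.
  refine hLg.trans_le ?_
  rw [← ENNReal.rpow_inv_le_iff hs_pos, ← one_div]
  set I := ∫⁻ x, g x ∂μ
  have hI_pos : I ≠ 0 := (zero_le.trans_lt hLg).ne'
  have h_test : I ≤ C * I ^ (1 / s') := calc
    I ≤ ∫⁻ x, F x * g x ^ (1 / s') ∂μ := by
      refine lintegral_mono fun x => ?_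
      calc g x = g x ^ (1 / s) * g x ^ (1 / s') := by
            rw [← ENNReal.rpow_add_of_nonneg _ _ (by positivity) (by positivity), h_exp,
              ENNReal.rpow_one]
        _ ≤ F x * g x ^ (1 / s') := by
            gcongr
            rw [one_div, ENNReal.rpow_inv_le_iff hs_pos]
            exact hgF x
    _ ≤ C * (∫⁻ x, (g x ^ (1 / s')) ^ s' ∂μ) ^ (1 / s') := hF _ (hg.pow_const _)
    _ = C * I ^ (1 / s') := by
      simp_rw [← ENNReal.rpow_mul, one_div_mul_cancel hs'_pos.ne', ENNReal.rpow_one]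
      rfl
  refine (ENNReal.mul_le_mul_iff_left (c := I ^ (1 / s')) ?_ ?_).1 ?_
  · simp [hI_pos, hg_fin.ne]
  · exact ENNReal.rpow_ne_top_of_nonneg (by positivity) hg_fin.ne
  · rwa [← ENNReal.rpow_add _ _ hI_pos hg_fin.ne, h_exp, ENNReal.rpow_one]

end Lintegral

/-- The measure `μ` is doubling at every scale, with constant `D`: doubling the radius of a ball
multiplies its measure by at most `D`. In contrast, Mathlib's `IsUnifLocDoublingMeasure` only
constrains small radii. The normalization `1 ≤ D` is automatic as soon as `μ ≠ 0`. -/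
structure IsDoublingWith {X : Type*} [PseudoMetricSpace X] [MeasurableSpace X] (μ : Measure X)
    (D : ℝ≥0) : Prop where
  one_le : 1 ≤ D
  measure_ball_two_mul_le : ∀ x r, μ (ball x (2 * r)) ≤ D * μ (ball x r)

namespace IsDoublingWith

variable {X : Type*} [PseudoMetricSpace X] [MeasurableSpace X] {μ : Measure X} {D : ℝ≥0}

lemma measure_ball_two_pow_mul_le (hμ : IsDoublingWith μ D) (x : X) (r : ℝ) (k : ℕ) :
    μ (ball x (2 ^ k * r)) ≤ D ^ k * μ (ball x r) := by
  induction k with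
  | zero => simp
  | succ k ih =>
    rw [pow_succ', mul_assoc, pow_succ', mul_assoc]
    exact (hμ.measure_ball_two_mul_le x _).trans (by gcongr)

lemma measure_ball_lt_top [IsLocallyFiniteMeasure μ] (hμ : IsDoublingWith μ D) (x : X) (r : ℝ) :
    μ (ball x r) < ∞ := by
  obtain ⟨ε, hε, h_fin⟩ := (μ.finiteAt_nhds x).exists_mem_basis nhds_basis_ball
  obtain ⟨k, hk⟩ := pow_unbounded_of_one_lt (r / ε) one_lt_two
  have hr : r ≤ 2 ^ k * ε := ((div_lt_iff₀ hε).1 hk).le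
  calc μ (ball x r) ≤ μ (ball x (2 ^ k * ε)) := measure_mono (ball_subset_ball hr)
    _ ≤ D ^ k * μ (ball x ε) := hμ.measure_ball_two_pow_mul_le x ε k
    _ < ∞ := ENNReal.mul_lt_top (ENNReal.pow_lt_top ENNReal.coe_lt_top) h_fin

lemma measure_ball_six_mul_le (hμ : IsDoublingWith μ D) {x y : X} {r : ℝ} (hy : y ∈ ball x r) :
    μ (ball y (6 * r)) ≤ D ^ 3 * μ (ball x r) := by
  have h_sub : ball y (6 * r) ⊆ ball x (2 ^ 3 * r) :=
    ball_subset_ball' (by rw [mem_ball] at hy; linarith [pos_of_mem_ball hy])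
  exact (measure_mono h_sub).trans (hμ.measure_ball_two_pow_mul_le x r 3)

end IsDoublingWith

lemma isDoublingWith_addHaar {E : Type*} [NormedAddCommGroup E] [NormedSpace ℝ E]
    [MeasurableSpace E] [BorelSpace E] [FiniteDimensional ℝ E] (μ : Measure E)
    [μ.IsAddHaarMeasure] : IsDoublingWith μ (2 ^ Module.finrank ℝ E) where
  one_le := one_le_pow₀ one_le_two
  measure_ball_two_mul_le x r := by
    rw [Measure.addHaar_ball_mul_of_pos μ x two_pos, ← Measure.addHaar_ball_center μ x]
    simp [ENNReal.ofReal_pow]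

/-- The centered Hardy–Littlewood maximal function of a nonnegative function `f` on a metric
measure space: the supremum of the averages of `f` over the balls centered at `x`. -/
def maximalFunction {X : Type*} [PseudoMetricSpace X] [MeasurableSpace X] (μ : Measure X)
    (f : X → ℝ≥0∞) (x : X) : ℝ≥0∞ :=
  ⨆ (r : ℝ) (_ : 0 < r), ⨍⁻ y in ball x r, f y ∂μ

section MaximalFunction

variable {X : Type*} [PseudoMetricSpace X] [MeasurableSpace X] {μ : Measure X}
  {f g h w : X → ℝ≥0∞}

lemma setLAverage_ball_le_maximalFunction (f : X → ℝ≥0∞) (x : X) {r : ℝ} (hr : 0 < r) :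
    ⨍⁻ y in ball x r, f y ∂μ ≤ maximalFunction μ f x :=
  le_iSup₂_of_le r hr le_rfl

lemma lt_maximalFunction_iff {x : X} {l : ℝ≥0∞} :
    l < maximalFunction μ f x ↔ ∃ r > 0, l < ⨍⁻ y in ball x r, f y ∂μ := by
  simp only [maximalFunction, lt_iSup_iff, exists_prop, gt_iff_lt]

lemma maximalFunction_mono_ae (hfg : f ≤ᵐ[μ] g) (x : X) :
    maximalFunction μ f x ≤ maximalFunction μ g x :=
  iSup₂_mono fun _ _ => setLAverage_mono_ae _ hfg

lemma maximalFunction_const_le (c : ℝ≥0∞) (x : X) : maximalFunction μ (fun _ => c) x ≤ c := by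
  refine iSup₂_le fun r _ => ?_
  rw [setLAverage_eq, setLIntegral_const]
  exact ENNReal.div_le_of_le_mul le_rfl

lemma maximalFunction_add_const_le (c : ℝ≥0∞) (x : X) :
    maximalFunction μ (fun y => f y + c) x ≤ maximalFunction μ f x + c := by
  refine iSup₂_le fun r hr => ?_
  calc ⨍⁻ y in ball x r, (f y + c) ∂μ
      = ⨍⁻ y in ball x r, f y ∂μ + ⨍⁻ _ in ball x r, c ∂μ :=
        lintegral_add_right _ measurable_const
    _ ≤ maximalFunction μ f x + c := by
        gcongr
        · exact setLAverage_ball_le_maximalFunction f x hr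
        · exact (setLAverage_ball_le_maximalFunction _ x hr).trans (maximalFunction_const_le c x)

lemma maximalFunction_rpow_mul_rpow_le (hg : Measurable g) (hh : Measurable h) {a b : ℝ}
    (ha : 0 ≤ a) (hb : 0 ≤ b) (hab : a + b = 1) (x : X) :
    maximalFunction μ (fun y => g y ^ a * h y ^ b) x ≤
      maximalFunction μ g x ^ a * maximalFunction μ h x ^ b := by
  refine iSup₂_le fun r hr => ?_
  calc ⨍⁻ y in ball x r, g y ^ a * h y ^ b ∂μ
      ≤ (⨍⁻ y in ball x r, g y ∂μ) ^ a * (⨍⁻ y in ball x r, h y ∂μ) ^ b :=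
        ENNReal.lintegral_mul_norm_pow_le hg.aemeasurable hh.aemeasurable ha hb hab
    _ ≤ _ := by gcongr <;> exact setLAverage_ball_le_maximalFunction _ x hr

lemma maximalFunction_eq_iSup_rat (f : X → ℝ≥0∞) (x : X) :
    maximalFunction μ f x = ⨆ (r : ℚ) (_ : 0 < r), ⨍⁻ y in ball x (r : ℝ), f y ∂μ := by
  refine le_antisymm (iSup₂_le fun r _ => ?_)
    (iSup₂_le fun r hr => setLAverage_ball_le_maximalFunction f x (Rat.cast_pos.2 hr))
  have h_union : ball x r = ⋃ q : {q : ℚ // (q : ℝ) < r}, ball x (q : ℝ) := by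
    refine subset_antisymm (fun y hy => ?_)
      (iUnion_subset fun q => ball_subset_ball q.2.le)
    obtain ⟨q, hyq, hqr⟩ := exists_rat_btwn (mem_ball.1 hy)
    exact mem_iUnion.2 ⟨⟨q, hqr⟩, hyq⟩
  have h_mono : Monotone fun q : {q : ℚ // (q : ℝ) < r} => ball x (q : ℝ) :=
    fun _ _ hab => ball_subset_ball (Rat.cast_le.2 hab)
  have h_lintegral : ∫⁻ y in ball x r, f y ∂μ =
      ⨆ q : {q : ℚ // (q : ℝ) < r}, ∫⁻ y in ball x (q : ℝ), f y ∂μ := by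
    rw [h_union, setLIntegral_iUnion_of_directed f h_mono.directed_le]
  rw [setLAverage_eq, div_eq_mul_inv, h_lintegral, ENNReal.iSup_mul]
  refine iSup_le fun ⟨q, hqr⟩ => ?_
  rcases le_or_gt q 0 with hq | hq
  · simp [ball_eq_empty.2 (Rat.cast_nonpos.2 hq)]
  · refine le_iSup₂_of_le q hq ?_
    rw [setLAverage_eq, div_eq_mul_inv]
    gcongr

lemma IsDoublingWith.setLIntegral_le_mul_maximalFunction [IsLocallyFiniteMeasure μ] {D : ℝ≥0}
    (hμ : IsDoublingWith μ D) {x : X} {r : ℝ} (hr : 0 < r) :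
    ∫⁻ y in ball x r, f y ∂μ ≤ μ (ball x r) * maximalFunction μ f x := by
  rw [← measure_mul_setLAverage f (hμ.measure_ball_lt_top x r).ne]
  gcongr
  exact setLAverage_ball_le_maximalFunction f x hr

lemma IsDoublingWith.setLIntegral_closedBall_le [IsLocallyFiniteMeasure μ] {D : ℝ≥0}
    (hμ : IsDoublingWith μ D) {x y : X} {r : ℝ} (hy : y ∈ ball x r) :
    ∫⁻ z in closedBall x (4 * r), w z ∂μ ≤ D ^ 3 * μ (ball x r) * maximalFunction μ w y := by
  have hr : 0 < r := pos_of_mem_ball hy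
  have h_sub : closedBall x (4 * r) ⊆ ball y (6 * r) :=
    closedBall_subset_ball' (by rw [mem_ball, dist_comm] at hy; linarith)
  calc ∫⁻ z in closedBall x (4 * r), w z ∂μ ≤ ∫⁻ z in ball y (6 * r), w z ∂μ :=
        lintegral_mono_set h_sub
    _ ≤ μ (ball y (6 * r)) * maximalFunction μ w y :=
        hμ.setLIntegral_le_mul_maximalFunction (by positivity)
    _ ≤ D ^ 3 * μ (ball x r) * maximalFunction μ w y := by
        gcongr
        exact hμ.measure_ball_six_mul_le hy

variable [OpensMeasurableSpace X]

lemma measurable_setLIntegral_ball [SecondCountableTopology X] [SFinite μ] (hf : Measurable f)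
    (r : ℝ) : Measurable fun x => ∫⁻ y in ball x r, f y ∂μ := by
  have h_ball : MeasurableSet {z : X × X | dist z.2 z.1 < r} :=
    measurableSet_lt (by fun_prop) measurable_const
  simp_rw [← lintegral_indicator measurableSet_ball]
  exact ((hf.comp measurable_snd).indicator h_ball).lintegral_prod_right'

lemma measurable_maximalFunction [SecondCountableTopology X] [SFinite μ] (hf : Measurable f) :
    Measurable (maximalFunction μ f) := by
  have h_ball (r : ℝ) : Measurable fun x => μ (ball x r) := by
    simpa using measurable_setLIntegral_ball (μ := μ) measurable_one r
  rw [funext (maximalFunction_eq_iSup_rat f)]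
  simp_rw [setLAverage_eq]
  exact .iSup fun r => .iSup fun _ => (measurable_setLIntegral_ball hf r).div (h_ball r)

variable [SecondCountableTopology X] [IsLocallyFiniteMeasure μ] {D : ℝ≥0}

lemma IsDoublingWith.mul_setLIntegral_closedBall_le (hμ : IsDoublingWith μ D) (hf : Measurable f)
    (hw : Measurable w) {l : ℝ≥0∞} {x : X} {r : ℝ} (hl : l < ⨍⁻ y in ball x r, f y ∂μ) :
    l * ∫⁻ z in closedBall x (4 * r), w z ∂μ ≤
      D ^ 3 * ∫⁻ y in ball x r, f y * maximalFunction μ w y ∂μ := by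
  set m := ∫⁻ z in closedBall x (4 * r), w z ∂μ
  calc l * m ≤ (⨍⁻ y in ball x r, f y ∂μ) * m := by gcongr
    _ = ⨍⁻ y in ball x r, f y * m ∂μ := (lintegral_mul_const m hf).symm
    _ ≤ ⨍⁻ y in ball x r, D ^ 3 * μ (ball x r) * (f y * maximalFunction μ w y) ∂μ := by
        refine laverage_mono_ae (ae_restrict_of_forall_mem measurableSet_ball fun y hy => ?_)
        beta_reduce
        rw [mul_left_comm]
        gcongr
        exact hμ.setLIntegral_closedBall_le hy
    _ = D ^ 3 * (μ (ball x r) * ⨍⁻ y in ball x r, f y * maximalFunction μ w y ∂μ) := by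
        rw [← mul_assoc]
        exact lintegral_const_mul _ (hf.mul (measurable_maximalFunction hw))
    _ = D ^ 3 * ∫⁻ y in ball x r, f y * maximalFunction μ w y ∂μ := by
        rw [measure_mul_setLAverage _ (hμ.measure_ball_lt_top x r).ne]

lemma IsDoublingWith.mul_setLIntegral_le_of_forall_lt_setLAverage (hμ : IsDoublingWith μ D)
    (hf : Measurable f) (hw : Measurable w) {l : ℝ≥0∞} {S : Set X} {ρ : X → ℝ} {R : ℝ}
    (hρ_pos : ∀ x ∈ S, 0 < ρ x) (hρ_le : ∀ x ∈ S, ρ x ≤ R)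
    (hl : ∀ x ∈ S, l < ⨍⁻ y in ball x (ρ x), f y ∂μ) :
    l * ∫⁻ x in S, w x ∂μ ≤ D ^ 3 * ∫⁻ x, f x * maximalFunction μ w x ∂μ := by
  obtain ⟨u, huS, hu_disj, hu_cover⟩ :=
    Vitali.exists_disjoint_subfamily_covering_enlargement_closedBall S id ρ R hρ_le 4 (by norm_num)
  have h_disj : u.PairwiseDisjoint fun x => ball x (ρ x) := fun x hx y hy hxy =>
    (hu_disj hx hy hxy).mono ball_subset_closedBall ball_subset_closedBall
  have hu_count : Countable u := (h_disj.countable_of_isOpen (fun _ _ => isOpen_ball)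
    fun x hx => nonempty_ball.2 (hρ_pos x (huS hx))).to_subtype
  have hS_cover : S ⊆ ⋃ b : u, closedBall (b : X) (4 * ρ b) := fun x hx => by
    obtain ⟨b, hb, hxb⟩ := hu_cover x hx
    exact mem_iUnion.2 ⟨⟨b, hb⟩, hxb (mem_closedBall_self (hρ_pos x hx).le)⟩
  calc l * ∫⁻ x in S, w x ∂μ
      ≤ l * ∑' b : u, ∫⁻ x in closedBall (b : X) (4 * ρ b), w x ∂μ := by
        gcongr
        exact (lintegral_mono_set hS_cover).trans (lintegral_iUnion_le _ _)
    _ = ∑' b : u, l * ∫⁻ x in closedBall (b : X) (4 * ρ b), w x ∂μ := ENNReal.tsum_mul_left.symm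
    _ ≤ ∑' b : u, D ^ 3 * ∫⁻ x in ball (b : X) (ρ b), f x * maximalFunction μ w x ∂μ :=
        ENNReal.tsum_le_tsum fun b => hμ.mul_setLIntegral_closedBall_le hf hw (hl b (huS b.2))
    _ = D ^ 3 * ∫⁻ x in ⋃ b : u, ball (b : X) (ρ b), f x * maximalFunction μ w x ∂μ := by
        rw [ENNReal.tsum_mul_left, lintegral_iUnion (fun _ => measurableSet_ball)
          (h_disj.subtype _ _)]
    _ ≤ D ^ 3 * ∫⁻ x, f x * maximalFunction μ w x ∂μ := by
        gcongr
        exact Measure.restrict_le_self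

theorem IsDoublingWith.mul_setLIntegral_lt_maximalFunction_le (hμ : IsDoublingWith μ D)
    (hf : Measurable f) (hw : Measurable w) (l : ℝ≥0∞) :
    l * ∫⁻ x in {x | l < maximalFunction μ f x}, w x ∂μ ≤
      D ^ 3 * ∫⁻ x, f x * maximalFunction μ w x ∂μ := by
  let S (R : ℕ) : Set X := {x | ∃ r : ℝ, 0 < r ∧ r ≤ R ∧ l < ⨍⁻ y in ball x r, f y ∂μ}
  have hS_mono : Monotone S := fun R R' hR x ⟨r, hr, hrR, hl⟩ =>
    ⟨r, hr, hrR.trans (Nat.cast_le.2 hR), hl⟩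
  have hS_iUnion : {x | l < maximalFunction μ f x} = ⋃ R, S R := by
    ext x
    simp only [S, mem_iUnion, mem_ofPred_eq, lt_maximalFunction_iff]
    refine ⟨fun ⟨r, hr, hl⟩ => ?_, fun ⟨_, r, hr, _, hl⟩ => ⟨r, hr, hl⟩⟩
    obtain ⟨R, hR⟩ := exists_nat_ge r
    exact ⟨R, r, hr, hR, hl⟩
  rw [hS_iUnion, setLIntegral_iUnion_of_directed w hS_mono.directed_le, ENNReal.mul_iSup]
  refine iSup_le fun R => ?_
  have h_radius (x : X) : ∃ r : ℝ, x ∈ S R → 0 < r ∧ r ≤ R ∧ l < ⨍⁻ y in ball x r, f y ∂μ := by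
    by_cases hx : x ∈ S R
    · exact hx.imp fun _ hr _ => hr
    · exact ⟨0, fun h => absurd h hx⟩
  choose ρ hρ using h_radius
  exact hμ.mul_setLIntegral_le_of_forall_lt_setLAverage hf hw (fun x hx => (hρ x hx).1)
    (fun x hx => (hρ x hx).2.1) fun x hx => (hρ x hx).2.2

lemma IsDoublingWith.mul_setLIntegral_lt_maximalFunction_le_setLIntegral
    (hμ : IsDoublingWith μ D) (hf : Measurable f) (hw : Measurable w) (t : ℝ≥0∞) :
    t * ∫⁻ x in {x | t < maximalFunction μ f x}, w x ∂μ ≤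
      2 * D ^ 3 * ∫⁻ x in {x | t < 2 * f x}, f x * maximalFunction μ w x ∂μ := by
  set A : Set X := {x | t < 2 * f x}
  have hA : MeasurableSet A := measurableSet_lt measurable_const (hf.const_mul 2)
  have h_split (x : X) : f x ≤ A.indicator f x + t / 2 := by
    by_cases hx : x ∈ A
    · simp [hx]
    · rw [indicator_of_notMem hx, zero_add, ENNReal.le_div_iff_mul_le (by simp) (by simp), mul_comm]
      exact not_lt.1 hx
  have h_sub : {x | t < maximalFunction μ f x} ⊆
      {x | t / 2 < maximalFunction μ (A.indicator f) x} := fun x hx => by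
    have h_le : maximalFunction μ f x ≤ maximalFunction μ (A.indicator f) x + t / 2 :=
      (maximalFunction_mono_ae (.of_forall h_split) x).trans (maximalFunction_add_const_le _ x)
    by_contra h_not
    refine hx.not_ge (h_le.trans ?_)
    calc _ ≤ t / 2 + t / 2 := by gcongr; exact not_lt.1 h_not
      _ = t := ENNReal.add_halves t
  calc t * ∫⁻ x in {x | t < maximalFunction μ f x}, w x ∂μ
      = 2 * (t / 2 * ∫⁻ x in {x | t < maximalFunction μ f x}, w x ∂μ) := by
        rw [← mul_assoc, ENNReal.mul_div_cancel two_ne_zero ENNReal.ofNat_ne_top]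
    _ ≤ 2 * (t / 2 * ∫⁻ x in {x | t / 2 < maximalFunction μ (A.indicator f) x}, w x ∂μ) := by
        gcongr 2 * (t / 2 * ?_)
        exact lintegral_mono_set h_sub
    _ ≤ 2 * (D ^ 3 * ∫⁻ x, A.indicator f x * maximalFunction μ w x ∂μ) := by
        gcongr 2 * ?_
        exact hμ.mul_setLIntegral_lt_maximalFunction_le (hf.indicator hA) hw _
    _ = 2 * D ^ 3 * ∫⁻ x in A, f x * maximalFunction μ w x ∂μ := by
        simp_rw [← indicator_mul_left A f, lintegral_indicator hA, mul_assoc]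

lemma IsDoublingWith.withDensity_lt_maximalFunction_mul_rpow_le (hμ : IsDoublingWith μ D)
    (hf : Measurable f) (hw : Measurable w) {t : ℝ} (ht : 0 < t) (s : ℝ) :
    μ.withDensity w {x | .ofReal t < maximalFunction μ f x} * .ofReal (t ^ s) ≤
      2 * D ^ 3 * (μ.withDensity (f * maximalFunction μ w) {x | .ofReal t < 2 * f x} *
        .ofReal (t ^ (s - 1))) := by
  rw [withDensity_apply', withDensity_apply', ← mul_assoc, ← mul_div_cancel₀ (t ^ s) ht.ne',
    ← Real.rpow_sub_one ht.ne', ENNReal.ofReal_mul ht.le, ← mul_assoc,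
    mul_comm _ (ENNReal.ofReal t)]
  gcongr ?_ * _
  exact hμ.mul_setLIntegral_lt_maximalFunction_le_setLIntegral hf hw _

lemma IsDoublingWith.lintegral_maximalFunction_rpow_withDensity_le (hμ : IsDoublingWith μ D)
    (hf : Measurable f) (hw : Measurable w) {r : ℝ} (hr : 1 < r) :
    ∫⁻ x, maximalFunction μ f x ^ r ∂μ.withDensity w ≤ 2 * D ^ 3 * .ofReal r.conjExponent *
      ∫⁻ x, (2 * f x) ^ (r - 1) ∂μ.withDensity (f * maximalFunction μ w) := by
  have hr_pos : 0 < r := by linarith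
  have hr_sub : 0 < r - 1 := sub_pos.2 hr
  have hr_conj : r.conjExponent * (r - 1) = r := div_mul_cancel₀ r hr_sub.ne'
  have hMf : Measurable (maximalFunction μ f) := measurable_maximalFunction hf
  calc ∫⁻ x, maximalFunction μ f x ^ r ∂μ.withDensity w
      = .ofReal r * ∫⁻ t in Ioi (0 : ℝ),
          μ.withDensity w {x | .ofReal t < maximalFunction μ f x} * .ofReal (t ^ (r - 1)) :=
        lintegral_rpow_eq_lintegral_measure_ofReal_lt_mul hMf.aemeasurable hr_pos
    _ ≤ .ofReal r * ∫⁻ t in Ioi (0 : ℝ), 2 * D ^ 3 *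
          (μ.withDensity (f * maximalFunction μ w) {x | .ofReal t < 2 * f x} *
            .ofReal (t ^ (r - 1 - 1))) := by
        gcongr _ * ?_
        exact setLIntegral_mono' measurableSet_Ioi fun t ht =>
          hμ.withDensity_lt_maximalFunction_mul_rpow_le hf hw ht (r - 1)
    _ = 2 * D ^ 3 * .ofReal r.conjExponent * (.ofReal (r - 1) * ∫⁻ t in Ioi (0 : ℝ),
          μ.withDensity (f * maximalFunction μ w) {x | .ofReal t < 2 * f x} *
            .ofReal (t ^ (r - 1 - 1))) := by
        rw [lintegral_const_mul' _ _ (by finiteness), ← mul_assoc (_ * _),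
          mul_assoc _ (ENNReal.ofReal r.conjExponent), ← ENNReal.ofReal_mul' hr_sub.le, hr_conj]
        ring
    _ = 2 * D ^ 3 * .ofReal r.conjExponent *
          ∫⁻ x, (2 * f x) ^ (r - 1) ∂μ.withDensity (f * maximalFunction μ w) := by
        rw [lintegral_rpow_eq_lintegral_measure_ofReal_lt_mul (hf.const_mul 2).aemeasurable hr_sub]

/-- The constant in the Fefferman–Stein weighted inequality of exponent `r > 1` for a measure which
is doubling with constant `D`. -/
def strongTypeConst (D : ℝ≥0) (r : ℝ) : ℝ≥0∞ := D ^ 3 * 2 ^ r * ENNReal.ofReal r.conjExponent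

theorem IsDoublingWith.lintegral_maximalFunction_rpow_mul_le (hμ : IsDoublingWith μ D)
    (hf : Measurable f) (hw : Measurable w) {r : ℝ} (hr : 1 < r) :
    ∫⁻ x, maximalFunction μ f x ^ r * w x ∂μ ≤
      strongTypeConst D r * ∫⁻ x, f x ^ r * maximalFunction μ w x ∂μ := by
  have hr_sub : 0 ≤ r - 1 := sub_nonneg.2 hr.le
  have hMf : Measurable (maximalFunction μ f) := measurable_maximalFunction hf
  have hMw : Measurable (maximalFunction μ w) := measurable_maximalFunction hw
  have h_rpow (a : ℝ≥0∞) : a * a ^ (r - 1) = a ^ r := by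
    simpa using (ENNReal.rpow_add_of_nonneg (x := a) 1 (r - 1) zero_le_one hr_sub).symm
  have h_density (x : X) : f x * maximalFunction μ w x * (2 * f x) ^ (r - 1) =
      2 ^ (r - 1) * (f x ^ r * maximalFunction μ w x) := by
    rw [ENNReal.mul_rpow_of_nonneg _ _ hr_sub, ← h_rpow (f x)]
    ring
  calc ∫⁻ x, maximalFunction μ f x ^ r * w x ∂μ
      = ∫⁻ x, maximalFunction μ f x ^ r ∂μ.withDensity w := by
        rw [lintegral_withDensity_eq_lintegral_mul μ hw (hMf.pow_const r)]
        simp only [Pi.mul_apply, mul_comm]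
    _ ≤ 2 * D ^ 3 * .ofReal r.conjExponent *
          ∫⁻ x, (2 * f x) ^ (r - 1) ∂μ.withDensity (f * maximalFunction μ w) :=
        hμ.lintegral_maximalFunction_rpow_withDensity_le hf hw hr
    _ = 2 * D ^ 3 * .ofReal r.conjExponent *
          (2 ^ (r - 1) * ∫⁻ x, f x ^ r * maximalFunction μ w x ∂μ) := by
        rw [lintegral_withDensity_eq_lintegral_mul μ (hf.mul hMw) (by fun_prop),
          ← lintegral_const_mul' (2 ^ (r - 1)) _ (by finiteness)]
        exact congrArg _ (lintegral_congr h_density)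
    _ = strongTypeConst D r * ∫⁻ x, f x ^ r * maximalFunction μ w x ∂μ := by
        rw [strongTypeConst, ← h_rpow 2]
        ring

theorem IsDoublingWith.lintegral_maximalFunction_rpow_le (hμ : IsDoublingWith μ D)
    (hf : Measurable f) {r : ℝ} (hr : 1 < r) :
    ∫⁻ x, maximalFunction μ f x ^ r ∂μ ≤ strongTypeConst D r * ∫⁻ x, f x ^ r ∂μ := by
  calc ∫⁻ x, maximalFunction μ f x ^ r ∂μ
      ≤ strongTypeConst D r * ∫⁻ x, f x ^ r * maximalFunction μ (fun _ => 1) x ∂μ := by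
        simpa only [mul_one] using
          hμ.lintegral_maximalFunction_rpow_mul_le hf (w := fun _ => 1) measurable_const hr
    _ ≤ strongTypeConst D r * ∫⁻ x, f x ^ r ∂μ := by
        gcongr with x
        exact mul_le_of_le_one_right' (maximalFunction_const_le 1 x)

end MaximalFunction

section Constants

variable {D : ℝ≥0} {r : ℝ}

lemma strongTypeConst_ne_zero (hD : 1 ≤ D) (hr : 1 < r) : strongTypeConst D r ≠ 0 := by
  have hD_pos : D ≠ 0 := (zero_lt_one.trans_le hD).ne'
  have hr_conj : 0 < r.conjExponent := (Real.HolderConjugate.conjExponent hr).symm.pos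
  simp [strongTypeConst, hD_pos, hr_conj]

lemma ofReal_conjExponent_le (hr : 1 < r) :
    ENNReal.ofReal r.conjExponent ≤ 2 * .ofReal (max r (r - 1)⁻¹) := by
  have hr_sub : 0 < r - 1 := sub_pos.2 hr
  have h_conj : r.conjExponent = 1 + (r - 1)⁻¹ := by
    rw [Real.conjExponent]
    field_simp
    ring
  rw [two_mul, h_conj, ENNReal.ofReal_add zero_le_one (by positivity)]
  gcongr
  · exact hr.le.trans (le_max_left _ _)
  · exact le_max_right _ _

lemma strongTypeConst_rpow_one_div_le (hD : 1 ≤ D) (hr : 1 < r) :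
    strongTypeConst D r ^ (1 / r) ≤ 2 * D ^ 3 * .ofReal r.conjExponent := by
  have hr_pos : 0 < r := by linarith
  have h_root {a : ℝ≥0∞} (ha : 1 ≤ a) : a ^ (1 / r) ≤ a := by
    simpa using ENNReal.rpow_le_rpow_of_exponent_le ha ((div_le_one hr_pos).2 hr.le)
  have h_conj : 1 ≤ ENNReal.ofReal r.conjExponent :=
    ENNReal.one_le_ofReal.2 (Real.HolderConjugate.conjExponent hr).symm.lt.le
  have hD_pow : (1 : ℝ≥0∞) ≤ D ^ 3 := one_le_pow₀ (mod_cast hD)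
  have h_two : ((2 : ℝ≥0∞) ^ r) ^ (1 / r) = 2 := by
    rw [one_div, ENNReal.rpow_rpow_inv hr_pos.ne']
  rw [strongTypeConst, ENNReal.mul_rpow_of_nonneg _ _ (by positivity),
    ENNReal.mul_rpow_of_nonneg _ _ (by positivity), h_two, mul_comm 2]
  gcongr
  · exact h_root hD_pow
  · exact h_root h_conj

lemma strongTypeConst_rpow_one_div_le_max_mul_max (hD : 1 ≤ D) (hr : 1 < r) {q : ℝ≥0∞}
    (hq : 1 < q) :
    strongTypeConst D r ^ (1 / r) ≤
      4 * D ^ 6 * .ofReal (max r (r - 1)⁻¹) * max q (q - 1)⁻¹ := by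
  have hD_pow : (D : ℝ≥0∞) ^ 3 ≤ D ^ 6 := pow_le_pow_right₀ (mod_cast hD) (by norm_num)
  calc strongTypeConst D r ^ (1 / r) ≤ 2 * D ^ 3 * .ofReal r.conjExponent :=
        strongTypeConst_rpow_one_div_le hD hr
    _ ≤ 2 * D ^ 6 * (2 * .ofReal (max r (r - 1)⁻¹)) * 1 := by
        rw [mul_one]
        gcongr 2 * ?_ * ?_
        exact ofReal_conjExponent_le hr
    _ = 4 * D ^ 6 * .ofReal (max r (r - 1)⁻¹) * 1 := by ring
    _ ≤ _ := by
        gcongr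
        exact hq.le.trans (le_max_left _ _)

lemma rpow_one_div_le_of_le_strongTypeConst_mul (hD : 1 ≤ D) (hr : 1 < r) {q : ℝ≥0∞} (hq : 1 < q)
    {A B : ℝ≥0∞} (hAB : A ≤ strongTypeConst D r * B) :
    A ^ (1 / r) ≤ 4 * D ^ 6 * .ofReal (max r (r - 1)⁻¹) * max q (q - 1)⁻¹ * B ^ (1 / r) := by
  have hr_inv : 0 ≤ 1 / r := by positivity
  calc A ^ (1 / r) ≤ strongTypeConst D r ^ (1 / r) * B ^ (1 / r) := by
        rw [← ENNReal.mul_rpow_of_nonneg _ _ hr_inv]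
        exact ENNReal.rpow_le_rpow hAB hr_inv
    _ ≤ _ := by
        gcongr ?_ * _
        exact strongTypeConst_rpow_one_div_le_max_mul_max hD hr hq

lemma strongTypeConst_mul_strongTypeConst_rpow_le {p q s' : ℝ} (hD : 1 ≤ D) (hq : 1 < q)
    (hs : (p / q).HolderConjugate s') :
    (strongTypeConst D q * strongTypeConst D s' ^ (1 / s')) ^ (1 / q) ≤
      4 * D ^ 6 * .ofReal p * .ofReal (q - 1)⁻¹ := by
  have hq_pos : 0 < q := by linarith
  have hD_pow : (1 : ℝ≥0∞) ≤ D ^ 3 := one_le_pow₀ (mod_cast hD)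
  have h_dual : (strongTypeConst D s' ^ (1 / s')) ^ (1 / q) ≤ 2 * D ^ 3 * .ofReal (p / q) := calc
    _ ≤ (2 * D ^ 3 * ENNReal.ofReal (p / q)) ^ (1 / q) := by
      rw [hs.symm.conjugate_eq]
      gcongr
      exact strongTypeConst_rpow_one_div_le hD hs.symm.lt
    _ ≤ (2 * D ^ 3 * ENNReal.ofReal (p / q)) ^ (1 : ℝ) :=
      ENNReal.rpow_le_rpow_of_exponent_le
        (one_le_mul (one_le_mul one_le_two hD_pow) (ENNReal.one_le_ofReal.2 hs.lt.le))
        ((div_le_one hq_pos).2 hq.le)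
    _ = _ := ENNReal.rpow_one _
  have h_real : q.conjExponent * (p / q) = p * (q - 1)⁻¹ := by
    rw [Real.conjExponent]
    field_simp
  calc _ = strongTypeConst D q ^ (1 / q) * (strongTypeConst D s' ^ (1 / s')) ^ (1 / q) :=
        ENNReal.mul_rpow_of_nonneg _ _ (by positivity)
    _ ≤ 2 * D ^ 3 * .ofReal q.conjExponent * (2 * D ^ 3 * .ofReal (p / q)) := by
        gcongr
        exact strongTypeConst_rpow_one_div_le hD hq
    _ = 4 * D ^ 6 * .ofReal (q.conjExponent * (p / q)) := by
        rw [ENNReal.ofReal_mul (Real.HolderConjugate.conjExponent hq).symm.nonneg]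
        ring
    _ = 4 * D ^ 6 * .ofReal p * .ofReal (q - 1)⁻¹ := by
        rw [h_real, ENNReal.ofReal_mul' (by linarith [inv_pos.2 (sub_pos.2 hq)]), ← mul_assoc]

end Constants

section Interpolation

lemma rpow_inv_mul_rpow_rpow_mul_rpow_eq_self {a G : ℝ≥0∞} {θ : ℝ} (hθ : 0 < θ) (haG : a ≤ G)
    (hG : G ≠ ∞) : (a ^ θ⁻¹ * G ^ (1 - θ⁻¹)) ^ θ * G ^ (1 - θ) = a := by
  rcases eq_or_ne G 0 with rfl | hG_pos
  · obtain rfl : a = 0 := le_zero_iff.1 haG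
    simp [hθ]
  · have h_exp : (1 - θ⁻¹) * θ + (1 - θ) = 0 := by field_simp; ring
    rw [ENNReal.mul_rpow_of_nonneg _ _ hθ.le, ← ENNReal.rpow_mul, ← ENNReal.rpow_mul,
      inv_mul_cancel₀ hθ.ne', ENNReal.rpow_one, mul_assoc, ← ENNReal.rpow_add _ _ hG_pos hG, h_exp,
      ENNReal.rpow_zero, mul_one]

lemma le_rpow_mul_rpow_one_sub_of_tsum_ne_top {ι : Type*} {a : ι → ℝ≥0∞} {p q : ℝ} (hp : 0 < p)
    (hq : 0 < q) (ha : ∑' i, a i ^ q ≠ ∞) (j : ι) :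
    a j ≤ (a j ^ (q / p) * ((∑' i, a i ^ q) ^ (1 / q)) ^ (1 - q / p)) ^ (p / q) *
      ((∑' i, a i ^ q) ^ (1 / q)) ^ (1 - p / q) := by
  have h_le : a j ≤ (∑' i, a i ^ q) ^ (1 / q) := by
    rw [one_div, ENNReal.le_rpow_inv_iff hq]
    exact ENNReal.le_tsum j
  have h := rpow_inv_mul_rpow_rpow_mul_rpow_eq_self (div_pos hp hq) h_le
    (ENNReal.rpow_ne_top_of_nonneg (by positivity) ha)
  rw [inv_div] at h
  exact h.ge

lemma mul_rpow_sub_one_le (a : ℝ≥0∞) {θ : ℝ} (hθ : θ ≤ 1) : a * a ^ (θ - 1) ≤ a ^ θ := by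
  rcases hθ.eq_or_lt with rfl | hθ
  · simp
  rcases eq_or_ne a 0 with rfl | ha
  · simp
  rcases eq_or_ne a ∞ with rfl | ha_top
  · simp [sub_neg.2 hθ]
  · rw [ENNReal.rpow_sub _ _ ha ha_top, ENNReal.rpow_one, ENNReal.mul_div_cancel ha ha_top]

lemma tsum_rpow_mul_rpow_one_sub_le {ι : Type*} (a : ι → ℝ≥0∞) {p q : ℝ} (hp : 0 < p)
    (hpq : p ≤ q) :
    ∑' j, (a j ^ (q / p) * ((∑' i, a i ^ q) ^ (1 / q)) ^ (1 - q / p)) ^ p ≤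
      (∑' i, a i ^ q) ^ (p / q) := by
  have hq : 0 < q := hp.trans_le hpq
  set S := ∑' i, a i ^ q
  have h_term (j : ι) : (a j ^ (q / p) * (S ^ (1 / q)) ^ (1 - q / p)) ^ p =
      a j ^ q * S ^ (p / q - 1) := by
    rw [ENNReal.mul_rpow_of_nonneg _ _ hp.le]
    simp_rw [← ENNReal.rpow_mul]
    congr 2 <;> field_simp
  simp_rw [h_term, ENNReal.tsum_mul_right]
  exact mul_rpow_sub_one_le S ((div_le_one hq).2 hpq)

end Interpolation

section VectorValued

variable {X : Type*} [PseudoMetricSpace X] [MeasurableSpace X] {μ : Measure X}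

lemma iSup_maximalFunction_le {ι : Type*} (f : ι → X → ℝ≥0∞) (x : X) :
    ⨆ j, maximalFunction μ (f j) x ≤ maximalFunction μ (fun y => ⨆ j, f j y) x :=
  iSup_le fun j => maximalFunction_mono_ae (.of_forall fun y => le_iSup (f · y) j) x

lemma tsum_maximalFunction_rpow_rpow_le {ι : Type*} {f H : ι → X → ℝ≥0∞} {G : X → ℝ≥0∞}
    (hH : ∀ j, Measurable (H j)) (hG : Measurable G) {p q : ℝ} (hp : 0 < p) (hpq : p ≤ q)
    (hf : ∀ j, ∀ᵐ y ∂μ, f j y ≤ H j y ^ (p / q) * G y ^ (1 - p / q)) (x : X) :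
    (∑' j, maximalFunction μ (f j) x ^ q) ^ (p / q) ≤
      (∑' j, maximalFunction μ (H j) x ^ p) ^ (p / q) *
        (maximalFunction μ G x ^ p) ^ (1 - p / q) := by
  have hq : 0 < q := hp.trans_le hpq
  have hθ : p / q ≤ 1 := (div_le_one hq).2 hpq
  have h_term (j : ι) : maximalFunction μ (f j) x ^ q ≤
      maximalFunction μ (H j) x ^ p * maximalFunction μ G x ^ (q - p) := calc
    _ ≤ (maximalFunction μ (H j) x ^ (p / q) * maximalFunction μ G x ^ (1 - p / q)) ^ q := by
      gcongr
      exact (maximalFunction_mono_ae (hf j) x).trans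
        (maximalFunction_rpow_mul_rpow_le (hH j) hG (by positivity) (sub_nonneg.2 hθ)
          (add_sub_cancel _ _) x)
    _ = _ := by
      rw [ENNReal.mul_rpow_of_nonneg _ _ hq.le, ← ENNReal.rpow_mul, ← ENNReal.rpow_mul,
        div_mul_cancel₀ p hq.ne', sub_mul, div_mul_cancel₀ p hq.ne', one_mul]
  calc (∑' j, maximalFunction μ (f j) x ^ q) ^ (p / q)
      ≤ ((∑' j, maximalFunction μ (H j) x ^ p) * maximalFunction μ G x ^ (q - p)) ^ (p / q) := by
        rw [← ENNReal.tsum_mul_right]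
        gcongr with j
        exact h_term j
    _ = _ := by
        rw [ENNReal.mul_rpow_of_nonneg _ _ (by positivity), ← ENNReal.rpow_mul, ← ENNReal.rpow_mul]
        congr 2
        field_simp

variable [OpensMeasurableSpace X] [SecondCountableTopology X] [IsLocallyFiniteMeasure μ] {D : ℝ≥0}
  {ι : Type*} [Countable ι] {f : ι → X → ℝ≥0∞}

theorem IsDoublingWith.lintegral_iSup_maximalFunction_rpow_le (hμ : IsDoublingWith μ D)
    (hf : ∀ j, Measurable (f j)) {p : ℝ} (hp : 1 < p) :
    ∫⁻ x, (⨆ j, maximalFunction μ (f j) x) ^ p ∂μ ≤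
      strongTypeConst D p * ∫⁻ x, (⨆ j, f j x) ^ p ∂μ := by
  refine le_trans ?_ (hμ.lintegral_maximalFunction_rpow_le (.iSup hf) hp)
  gcongr with x
  exact iSup_maximalFunction_le f x

lemma IsDoublingWith.lintegral_tsum_maximalFunction_rpow_le_of_le_rpow_mul_rpow
    (hμ : IsDoublingWith μ D) {H : ι → X → ℝ≥0∞} {G : X → ℝ≥0∞}
    (hH : ∀ j, Measurable (H j)) (hG : Measurable G) {p q : ℝ} (hp : 1 < p) (hpq : p ≤ q)
    (hf : ∀ j, ∀ᵐ y ∂μ, f j y ≤ H j y ^ (p / q) * G y ^ (1 - p / q)) :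
    ∫⁻ x, (∑' j, maximalFunction μ (f j) x ^ q) ^ (p / q) ∂μ ≤ strongTypeConst D p *
      ((∫⁻ x, ∑' j, H j x ^ p ∂μ) ^ (p / q) * (∫⁻ x, G x ^ p ∂μ) ^ (1 - p / q)) := by
  have hq : 0 < q := by linarith
  have hθ_nonneg : 0 ≤ p / q := by positivity
  have hθ_le : 0 ≤ 1 - p / q := sub_nonneg.2 ((div_le_one hq).2 hpq)
  have hMH (j : ι) : Measurable fun x => maximalFunction μ (H j) x ^ p :=
    (measurable_maximalFunction (hH j)).pow_const p
  have hMG : Measurable fun x => maximalFunction μ G x ^ p :=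
    (measurable_maximalFunction hG).pow_const p
  calc ∫⁻ x, (∑' j, maximalFunction μ (f j) x ^ q) ^ (p / q) ∂μ
      ≤ ∫⁻ x, (∑' j, maximalFunction μ (H j) x ^ p) ^ (p / q) *
          (maximalFunction μ G x ^ p) ^ (1 - p / q) ∂μ := by
        gcongr with x
        exact tsum_maximalFunction_rpow_rpow_le hH hG (by linarith) hpq hf x
    _ ≤ (∫⁻ x, ∑' j, maximalFunction μ (H j) x ^ p ∂μ) ^ (p / q) *
          (∫⁻ x, maximalFunction μ G x ^ p ∂μ) ^ (1 - p / q) :=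
        ENNReal.lintegral_mul_norm_pow_le (Measurable.tsum hMH).aemeasurable
          hMG.aemeasurable hθ_nonneg hθ_le (add_sub_cancel _ _)
    _ ≤ (strongTypeConst D p * ∫⁻ x, ∑' j, H j x ^ p ∂μ) ^ (p / q) *
          (strongTypeConst D p * ∫⁻ x, G x ^ p ∂μ) ^ (1 - p / q) := by
        gcongr ?_ ^ _ * ?_ ^ _
        · rw [lintegral_tsum fun j => (hMH j).aemeasurable,
            lintegral_tsum fun j => ((hH j).pow_const p).aemeasurable, ← ENNReal.tsum_mul_left]
          exact ENNReal.tsum_le_tsum fun j => hμ.lintegral_maximalFunction_rpow_le (hH j) hp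
        · exact hμ.lintegral_maximalFunction_rpow_le hG hp
    _ = _ := by
        rw [ENNReal.mul_rpow_of_nonneg _ _ hθ_nonneg, ENNReal.mul_rpow_of_nonneg _ _ hθ_le,
          mul_mul_mul_comm, ← ENNReal.rpow_add_of_nonneg _ _ hθ_nonneg hθ_le, add_sub_cancel,
          ENNReal.rpow_one]

theorem IsDoublingWith.lintegral_tsum_maximalFunction_rpow_le (hμ : IsDoublingWith μ D)
    (hf : ∀ j, Measurable (f j)) {p q : ℝ} (hp : 1 < p) (hpq : p ≤ q) :
    ∫⁻ x, (∑' j, maximalFunction μ (f j) x ^ q) ^ (p / q) ∂μ ≤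
      strongTypeConst D p * ∫⁻ x, (∑' j, f j x ^ q) ^ (p / q) ∂μ := by
  have hp_pos : 0 < p := by linarith
  have hq : 0 < q := by linarith
  have hθ : 0 < p / q := by positivity
  set S : X → ℝ≥0∞ := fun x => ∑' j, f j x ^ q
  have hS : Measurable S := .tsum fun j => (hf j).pow_const q
  have hG : Measurable fun x => S x ^ (1 / q) := hS.pow_const _
  by_cases h_top : ∫⁻ x, S x ^ (p / q) ∂μ = ∞
  · rw [h_top, ENNReal.mul_top (strongTypeConst_ne_zero hμ.one_le hp)]
    exact le_top
  have h_factor (j : ι) : ∀ᵐ x ∂μ,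
      f j x ≤ (f j x ^ (q / p) * (S x ^ (1 / q)) ^ (1 - q / p)) ^ (p / q) *
        (S x ^ (1 / q)) ^ (1 - p / q) := by
    filter_upwards [ae_lt_top (hS.pow_const _) h_top] with x hx
    refine le_rpow_mul_rpow_one_sub_of_tsum_ne_top (a := (f · x)) hp_pos hq
      (fun hS_top => hx.ne ?_) j
    exact (ENNReal.rpow_eq_top_iff_of_pos hθ).2 hS_top
  have h_sum : ∫⁻ x, ∑' j, (f j x ^ (q / p) * (S x ^ (1 / q)) ^ (1 - q / p)) ^ p ∂μ ≤
      ∫⁻ x, S x ^ (p / q) ∂μ :=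
    lintegral_mono fun x => tsum_rpow_mul_rpow_one_sub_le (f · x) hp_pos hpq
  have hG_rpow (x : X) : (S x ^ (1 / q)) ^ p = S x ^ (p / q) := by
    rw [← ENNReal.rpow_mul, one_div_mul_eq_div]
  calc _ ≤ strongTypeConst D p *
        ((∫⁻ x, ∑' j, (f j x ^ (q / p) * (S x ^ (1 / q)) ^ (1 - q / p)) ^ p ∂μ) ^ (p / q) *
          (∫⁻ x, (S x ^ (1 / q)) ^ p ∂μ) ^ (1 - p / q)) :=
        hμ.lintegral_tsum_maximalFunction_rpow_le_of_le_rpow_mul_rpow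
          (fun j => ((hf j).pow_const _).mul (hG.pow_const _)) hG hp hpq h_factor
    _ ≤ strongTypeConst D p *
        ((∫⁻ x, S x ^ (p / q) ∂μ) ^ (p / q) * (∫⁻ x, S x ^ (p / q) ∂μ) ^ (1 - p / q)) := by
        simp_rw [hG_rpow]
        gcongr
    _ = _ := by
        rw [← ENNReal.rpow_add_of_nonneg _ _ hθ.le (sub_nonneg.2 ((div_le_one hq).2 hpq)),
          add_sub_cancel, ENNReal.rpow_one]

theorem IsDoublingWith.lintegral_tsum_maximalFunction_rpow_rpow_le (hμ : IsDoublingWith μ D)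
    (hf : ∀ j, Measurable (f j)) {q s s' : ℝ} (hq : 1 < q) (hs : s.HolderConjugate s') :
    (∫⁻ x, (∑' j, maximalFunction μ (f j) x ^ q) ^ s ∂μ) ^ (1 / s) ≤
      strongTypeConst D q * strongTypeConst D s' ^ (1 / s') *
        (∫⁻ x, (∑' j, f j x ^ q) ^ s ∂μ) ^ (1 / s) := by
  refine lintegral_rpow_le_of_forall_lintegral_mul_le hs fun w hw => ?_
  have hMw : Measurable (maximalFunction μ w) := measurable_maximalFunction hw
  have hfq (j : ι) : Measurable fun x => f j x ^ q := (hf j).pow_const q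
  have hMf (j : ι) : Measurable fun x => maximalFunction μ (f j) x ^ q :=
    (measurable_maximalFunction (hf j)).pow_const q
  calc ∫⁻ x, (∑' j, maximalFunction μ (f j) x ^ q) * w x ∂μ
      = ∑' j, ∫⁻ x, maximalFunction μ (f j) x ^ q * w x ∂μ := by
        simp_rw [← ENNReal.tsum_mul_right]
        exact lintegral_tsum fun j => ((hMf j).mul hw).aemeasurable
    _ ≤ ∑' j, strongTypeConst D q * ∫⁻ x, f j x ^ q * maximalFunction μ w x ∂μ :=
        ENNReal.tsum_le_tsum fun j => hμ.lintegral_maximalFunction_rpow_mul_le (hf j) hw hq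
    _ = strongTypeConst D q * ∫⁻ x, (∑' j, f j x ^ q) * maximalFunction μ w x ∂μ := by
        simp_rw [← ENNReal.tsum_mul_right]
        rw [ENNReal.tsum_mul_left]
        exact congrArg _ (lintegral_tsum fun j => ((hfq j).mul hMw).aemeasurable).symm
    _ ≤ strongTypeConst D q * ((∫⁻ x, (∑' j, f j x ^ q) ^ s ∂μ) ^ (1 / s) *
          (∫⁻ x, maximalFunction μ w x ^ s' ∂μ) ^ (1 / s')) := by
        gcongr
        exact ENNReal.lintegral_mul_le_Lp_mul_Lq μ hs (Measurable.tsum hfq).aemeasurable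
          hMw.aemeasurable
    _ ≤ strongTypeConst D q * ((∫⁻ x, (∑' j, f j x ^ q) ^ s ∂μ) ^ (1 / s) *
          (strongTypeConst D s' * ∫⁻ x, w x ^ s' ∂μ) ^ (1 / s')) := by
        gcongr _ * (_ * ?_ ^ _)
        · exact one_div_nonneg.2 hs.symm.nonneg
        exact hμ.lintegral_maximalFunction_rpow_le hw hs.symm.lt
    _ = _ := by
        rw [ENNReal.mul_rpow_of_nonneg _ _ (one_div_nonneg.2 hs.symm.nonneg)]
        ring

theorem IsDoublingWith.lintegral_tsum_maximalFunction_rpow_rpow_one_div_le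
    (hμ : IsDoublingWith μ D) (hf : ∀ j, Measurable (f j)) {p q : ℝ} (hq : 1 < q) (hqp : q < p) :
    (∫⁻ x, (∑' j, maximalFunction μ (f j) x ^ q) ^ (p / q) ∂μ) ^ (1 / p) ≤
      4 * D ^ 6 * .ofReal p * .ofReal (q - 1)⁻¹ *
        (∫⁻ x, (∑' j, f j x ^ q) ^ (p / q) ∂μ) ^ (1 / p) := by
  have hq_pos : 0 < q := by linarith
  have hq_inv : 0 ≤ 1 / q := by positivity
  have hs := Real.HolderConjugate.conjExponent ((one_lt_div hq_pos).2 hqp)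
  have h_exp : 1 / p = 1 / (p / q) * (1 / q) := by field_simp
  rw [h_exp, ENNReal.rpow_mul, ENNReal.rpow_mul]
  calc _ ≤ (strongTypeConst D q *
        strongTypeConst D (p / q).conjExponent ^ (1 / (p / q).conjExponent) *
          (∫⁻ x, (∑' j, f j x ^ q) ^ (p / q) ∂μ) ^ (1 / (p / q))) ^ (1 / q) := by
        gcongr ?_ ^ _
        exact hμ.lintegral_tsum_maximalFunction_rpow_rpow_le hf hq hs
    _ ≤ _ := by
        rw [ENNReal.mul_rpow_of_nonneg _ _ hq_inv]
        gcongr ?_ * _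
        exact strongTypeConst_mul_strongTypeConst_rpow_le hμ.one_le hq hs

end VectorValued

section SequenceNorm

variable {ι : Type*} [MeasurableSpace ι] [MeasurableSingletonClass ι]

lemma eLpNorm_top_count (a : ι → ℝ≥0∞) : eLpNorm a ∞ .count = ⨆ j, a j := by
  simp [eLpNormEssSup_count]

lemma eLpNorm_count_eq_tsum (a : ι → ℝ≥0∞) {q : ℝ≥0∞} (hq : q ≠ 0) (hq_top : q ≠ ∞) :
    eLpNorm a q .count = (∑' j, a j ^ q.toReal) ^ (1 / q.toReal) := by
  simp [eLpNorm_eq_lintegral_rpow_enorm_toReal hq hq_top, lintegral_count]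

lemma elq_eq_eLpNorm_count (a : ℤ → ℝ≥0∞) {q : ℝ≥0∞} (hq : q ≠ 0) :
    elq q a = eLpNorm a q .count := by
  rw [elq]
  split_ifs with hq_top
  · rw [hq_top, eLpNorm_top_count]
  · rw [eLpNorm_count_eq_tsum a hq hq_top]

end SequenceNorm

lemma HLmax_eq_maximalFunction {n : ℕ} (f : EuclideanSpace ℝ (Fin n) → ℂ)
    (x : EuclideanSpace ℝ (Fin n)) :
    HLmax f x = maximalFunction volume (fun y => ‖f y‖₊) x := by
  have h_translate (r : ℝ) : ∫⁻ y in ball (0 : EuclideanSpace ℝ (Fin n)) r, (‖f (x + y)‖₊ : ℝ≥0∞) =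
      ∫⁻ y in ball x r, (‖f y‖₊ : ℝ≥0∞) := by
    simpa using (measurePreserving_add_left volume x).setLIntegral_comp_preimage_emb
      (MeasurableEquiv.addLeft x).measurableEmbedding (fun y => (‖f y‖₊ : ℝ≥0∞)) (ball x r)
  simp_rw [HLmax, maximalFunction, iSup_subtype, setLAverage_eq, h_translate,
    Measure.addHaar_ball_center volume x, ENNReal.div_eq_inv_mul]

theorem fefferman_stein_general {X : Type*} [PseudoMetricSpace X] [SecondCountableTopology X]
    [MeasurableSpace X] [OpensMeasurableSpace X] {μ : Measure X} [IsLocallyFiniteMeasure μ]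
    {D : ℝ≥0} (hμ : IsDoublingWith μ D) {ι : Type*} [Countable ι] [MeasurableSpace ι]
    [MeasurableSingletonClass ι] {p : ℝ} {q : ℝ≥0∞} (hp : 1 < p) (hq : 1 < q)
    {f : ι → X → ℝ≥0∞} (hf : ∀ j, Measurable (f j)) :
    (∫⁻ x, eLpNorm (fun j => maximalFunction μ (f j) x) q .count ^ p ∂μ) ^ (1 / p) ≤
      4 * D ^ 6 * .ofReal (max p (p - 1)⁻¹) * max q (q - 1)⁻¹ *
        (∫⁻ x, eLpNorm (fun j => f j x) q .count ^ p ∂μ) ^ (1 / p) := by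
  have hq_pos : q ≠ 0 := (zero_lt_one.trans hq).ne'
  rcases eq_or_ne q ∞ with rfl | hq_top
  · simp_rw [eLpNorm_top_count]
    exact rpow_one_div_le_of_le_strongTypeConst_mul hμ.one_le hp hq
      (hμ.lintegral_iSup_maximalFunction_rpow_le hf hp)
  simp_rw [eLpNorm_count_eq_tsum _ hq_pos hq_top, ← ENNReal.rpow_mul, one_div_mul_eq_div]
  rcases le_or_gt p q.toReal with hpq | hqp
  · exact rpow_one_div_le_of_le_strongTypeConst_mul hμ.one_le hp hq
      (hμ.lintegral_tsum_maximalFunction_rpow_le hf hp hpq)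
  · have hq_real : 1 < q.toReal := by
      simpa using (ENNReal.toReal_lt_toReal ENNReal.one_ne_top hq_top).2 hq
    refine (hμ.lintegral_tsum_maximalFunction_rpow_rpow_one_div_le hf hq_real hqp).trans ?_
    gcongr
    · exact le_max_left _ _
    · refine le_trans ?_ (le_max_right _ _)
      rw [ENNReal.ofReal_inv_of_pos (sub_pos.2 hq_real), ENNReal.ofReal_sub _ zero_le_one,
        ENNReal.ofReal_toReal hq_top, ENNReal.ofReal_one]

/-- Fefferman–Stein vector-valued maximal inequality:
`‖‖(Mf_j)_j‖_{ℓ^q}‖_{L^p} ≤ C_n μ(p) μ(q) ‖‖(f_j)_j‖_{ℓ^q}‖_{L^p}`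
for `1 < p < ∞`, `1 < q ≤ ∞`, where `μ(r) = max{r, (r-1)⁻¹}` and `C_n`
depends only on the dimension. -/
theorem fefferman_stein (n : ℕ) :
    ∃ C > (0 : ℝ), ∀ (p : ℝ) (q : ENNReal), 1 < p → 1 < q →
      ∀ f : ℤ → EuclideanSpace ℝ (Fin n) → ℂ, (∀ j, Measurable (f j)) →
        (∫⁻ x, (elq q (fun j => HLmax (f j) x)) ^ p) ^ (1 / p)
          ≤ ENNReal.ofReal (C * max p (p - 1)⁻¹) * max q (q - 1)⁻¹ *
            (∫⁻ x, (elq q (fun j => (‖f j x‖₊ : ENNReal))) ^ p) ^ (1 / p) := by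
  have h_doubling := isDoublingWith_addHaar (volume : Measure (EuclideanSpace ℝ (Fin n)))
  refine ⟨4 * (2 ^ Module.finrank ℝ (EuclideanSpace ℝ (Fin n))) ^ 6, by positivity,
    fun p q hp hq f hf => ?_⟩
  simp_rw [elq_eq_eLpNorm_count _ (zero_lt_one.trans hq).ne', HLmax_eq_maximalFunction]
  rw [ENNReal.ofReal_mul (by positivity)]
  simpa [ENNReal.ofReal_mul, ENNReal.ofReal_pow] using
    fefferman_stein_general h_doubling hp hq fun j => (hf j).nnnorm.coe_nnreal_ennreal

end
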